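/- For every real x > 0, the function t ↦ t^{-2} exp(iπt²/2) is integrable on (x, ∞) and (1+i)/2 - G(x) = (i/π)·exp(iπx²/2)/x - (i/π)·∫_x^∞ t^{-2} exp(iπt²/2) dt. -/

import Mathlib

open Real Complex intervalIntegral MeasureTheory

noncomputable def fresnelG (x : ℝ) : ℂ :=
  ∫ t in (0:ℝ)..x, Complex.exp (Complex.I * π * (t : ℂ) ^ 2 / 2)

/-!
For `0 < b.re`, integrating `exp (-b t²) = (-2bt)⁻¹ · d/dt exp (-b t²)` by parts over `(x, ∞)` and
subtracting from the Gaussian integral `∫₀^∞ exp (-b t²) dt = √(π / b) / 2` gives an identity both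
of whose sides are continuous in `b` on the closed right half-plane minus the origin: the weight
`t⁻²` makes the remaining improper integral converge absolutely up to the imaginary axis. The
identity therefore persists on the imaginary axis, and the Fresnel case is `b = -iπ/2`, where
`√(π / b) = √(2i) = 1 + i`.
-/

open Filter Set Topology

section Gaussian

variable {b : ℂ} {x : ℝ}

lemma norm_cexp_neg_mul_sq_le_one (hb : 0 ≤ b.re) (t : ℝ) : ‖cexp (-b * (t : ℂ) ^ 2)‖ ≤ 1 := by
  rw [norm_cexp_neg_mul_sq, Real.exp_le_one_iff, neg_mul]
  exact neg_nonpos.mpr (mul_nonneg hb (sq_nonneg t))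

lemma integrable_mul_cexp_neg_mul_sq_of_re_nonneg {μ : Measure ℝ} {g : ℝ → ℂ}
    (hg : Integrable g μ) (hb : 0 ≤ b.re) :
    Integrable (fun t : ℝ ↦ g t * cexp (-b * (t : ℂ) ^ 2)) μ :=
  hg.mul_bdd (by fun_prop) (.of_forall (norm_cexp_neg_mul_sq_le_one hb))

lemma continuousOn_integral_mul_cexp_neg_mul_sq {μ : Measure ℝ} {g : ℝ → ℂ}
    (hg : Integrable g μ) :
    ContinuousOn (fun b : ℂ ↦ ∫ t, g t * cexp (-b * (t : ℂ) ^ 2) ∂μ) {b | 0 ≤ b.re} := by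
  refine continuousOn_of_dominated
    (fun b hb ↦ (integrable_mul_cexp_neg_mul_sq_of_re_nonneg hg hb).aestronglyMeasurable)
    (fun b hb ↦ .of_forall fun t ↦ ?_) hg.norm (.of_forall fun t ↦ by fun_prop)
  rw [norm_mul]
  exact mul_le_of_le_one_right (norm_nonneg _) (norm_cexp_neg_mul_sq_le_one hb t)

lemma integrableOn_Ioi_inv_ofReal_pow {n : ℕ} (hn : 1 < n) (hx : 0 < x) :
    IntegrableOn (fun t : ℝ ↦ ((t : ℂ) ^ n)⁻¹) (Ioi x) := by
  simpa only [cpow_neg, cpow_natCast] using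
    integrableOn_Ioi_cpow_of_lt (a := -(n : ℂ)) (by simpa using hn) hx

lemma integrableOn_Ioi_inv_sq_mul_cexp_neg_mul_sq (hb : 0 ≤ b.re) (hx : 0 < x) :
    IntegrableOn (fun t : ℝ ↦ ((t : ℂ) ^ 2)⁻¹ * cexp (-b * (t : ℂ) ^ 2)) (Ioi x) :=
  integrable_mul_cexp_neg_mul_sq_of_re_nonneg (integrableOn_Ioi_inv_ofReal_pow one_lt_two hx) hb

lemma hasDerivAt_neg_cexp_neg_mul_sq_div (hb : b ≠ 0) {z : ℂ} (hz : z ≠ 0) :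
    HasDerivAt (fun z : ℂ ↦ -(cexp (-b * z ^ 2) / (2 * b * z)))
      (cexp (-b * z ^ 2) + (2 * b)⁻¹ * ((z ^ 2)⁻¹ * cexp (-b * z ^ 2))) z := by
  have hnum : HasDerivAt (fun z : ℂ ↦ cexp (-b * z ^ 2))
      (cexp (-b * z ^ 2) * (-b * (2 * z))) z := by
    simpa using ((hasDerivAt_pow 2 z).const_mul (-b)).cexp
  have hden : HasDerivAt (fun z : ℂ ↦ 2 * b * z) (2 * b) z := hasDerivAt_const_mul (2 * b)
  refine (hnum.div hden (by simp [hb, hz])).neg.congr_deriv ?_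
  field_simp
  ring

lemma tendsto_cexp_neg_mul_sq_div_atTop (hb : 0 ≤ b.re) :
    Tendsto (fun t : ℝ ↦ cexp (-b * (t : ℂ) ^ 2) / (2 * b * t)) atTop (𝓝 0) := by
  have hinv : Tendsto (fun t : ℝ ↦ (2 * b * t)⁻¹) atTop (𝓝 0) := by
    simpa [mul_comm] using (tendsto_inv_atTop_zero (𝕜 := ℝ)).ofReal.const_mul (2 * b)⁻¹
  refine squeeze_zero_norm (fun t ↦ ?_) (tendsto_zero_iff_norm_tendsto_zero.mp hinv)
  rw [div_eq_mul_inv, norm_mul]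
  exact mul_le_of_le_one_left (norm_nonneg _) (norm_cexp_neg_mul_sq_le_one hb t)

lemma integral_Ioi_cexp_neg_mul_sq (hb : 0 < b.re) (hx : 0 < x) :
    ∫ t in Ioi x, cexp (-b * (t : ℂ) ^ 2) =
      cexp (-b * (x : ℂ) ^ 2) / (2 * b * x) -
        (2 * b)⁻¹ * ∫ t in Ioi x, ((t : ℂ) ^ 2)⁻¹ * cexp (-b * (t : ℂ) ^ 2) := by
  have hb₀ : b ≠ 0 := ne_zero_of_re_pos hb
  have hgauss : IntegrableOn (fun t : ℝ ↦ cexp (-b * (t : ℂ) ^ 2)) (Ioi x) :=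
    (integrable_cexp_neg_mul_sq hb).integrableOn
  have htail := (integrableOn_Ioi_inv_sq_mul_cexp_neg_mul_sq hb.le hx).const_mul (2 * b)⁻¹
  have hftc := integral_Ioi_of_hasDerivAt_of_tendsto'
    (fun t ht ↦ (hasDerivAt_neg_cexp_neg_mul_sq_div hb₀
      (ofReal_ne_zero.mpr (hx.trans_le ht).ne')).comp_ofReal)
    (hgauss.add htail) (tendsto_cexp_neg_mul_sq_div_atTop hb.le).neg
  rw [integral_add hgauss htail, MeasureTheory.integral_const_mul] at hftc
  linear_combination hftc

lemma gaussian_sub_intervalIntegral_of_re_pos (hb : 0 < b.re) (hx : 0 < x) :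
    (π / b) ^ (1 / 2 : ℂ) / 2 - ∫ t in (0 : ℝ)..x, cexp (-b * (t : ℂ) ^ 2) =
      cexp (-b * (x : ℂ) ^ 2) / (2 * b * x) -
        (2 * b)⁻¹ * ∫ t in Ioi x, ((t : ℂ) ^ 2)⁻¹ * cexp (-b * (t : ℂ) ^ 2) := by
  rw [← integral_gaussian_complex_Ioi hb, ← integral_Ioi_cexp_neg_mul_sq hb hx,
    ← integral_Ioi_sub_Ioi (integrable_cexp_neg_mul_sq hb).integrableOn hx.le, sub_sub_cancel]

lemma ofReal_div_mem_slitPlane {r : ℝ} (hr : 0 < r) (hb : 0 ≤ b.re) (hb₀ : b ≠ 0) :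
    (r / b : ℂ) ∈ slitPlane := by
  have hnormSq : 0 < normSq b := normSq_pos.mpr hb₀
  rw [mem_slitPlane_iff, div_eq_mul_inv, re_ofReal_mul, im_ofReal_mul, inv_re, inv_im]
  rcases hb.lt_or_eq with hre | hre
  · exact .inl (by positivity)
  · have him : b.im ≠ 0 := fun him ↦ hb₀ (Complex.ext hre.symm him)
    exact .inr (mul_ne_zero hr.ne' (div_ne_zero (neg_ne_zero.mpr him) hnormSq.ne'))

theorem gaussian_sub_intervalIntegral (hb : 0 ≤ b.re) (hb₀ : b ≠ 0) (hx : 0 < x) :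
    (π / b) ^ (1 / 2 : ℂ) / 2 - ∫ t in (0 : ℝ)..x, cexp (-b * (t : ℂ) ^ 2) =
      cexp (-b * (x : ℂ) ^ 2) / (2 * b * x) -
        (2 * b)⁻¹ * ∫ t in Ioi x, ((t : ℂ) ^ 2)⁻¹ * cexp (-b * (t : ℂ) ^ 2) := by
  let S : Set ℂ := {b | 0 ≤ b.re ∧ b ≠ 0}
  have hsqrt : ContinuousOn (fun b : ℂ ↦ (π / b) ^ (1 / 2 : ℂ)) S :=
    (continuousOn_const.div continuousOn_id fun _ h ↦ h.2).cpow continuousOn_const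
      fun _ h ↦ ofReal_div_mem_slitPlane pi_pos h.1 h.2
  have hinit : Continuous fun b : ℂ ↦ ∫ t in (0 : ℝ)..x, cexp (-b * (t : ℂ) ^ 2) :=
    continuous_parametric_intervalIntegral_of_continuous' (by fun_prop) 0 x
  have hboundary : ContinuousOn (fun b : ℂ ↦ cexp (-b * (x : ℂ) ^ 2) / (2 * b * x)) S :=
    ContinuousOn.div (by fun_prop) (by fun_prop) fun _ h ↦ by simp [h.2, hx.ne']
  have hcoeff : ContinuousOn (fun b : ℂ ↦ (2 * b)⁻¹) S :=
    ContinuousOn.inv₀ (by fun_prop) fun _ h ↦ by simp [h.2]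
  have htail : ContinuousOn
      (fun b : ℂ ↦ ∫ t in Ioi x, ((t : ℂ) ^ 2)⁻¹ * cexp (-b * (t : ℂ) ^ 2)) S :=
    (continuousOn_integral_mul_cexp_neg_mul_sq
      (integrableOn_Ioi_inv_ofReal_pow one_lt_two hx)).mono fun _ h ↦ h.1
  have hclosure : S ⊆ closure {b | 0 < b.re} := fun b h ↦ by
    rw [closure_setOfPred_lt_re]
    exact h.1
  exact EqOn.of_subset_closure (fun _ h ↦ gaussian_sub_intervalIntegral_of_re_pos h hx)
    ((hsqrt.div_const 2).sub hinit.continuousOn) (hboundary.sub (hcoeff.mul htail))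
    (fun _ h ↦ ⟨le_of_lt h, ne_zero_of_re_pos h⟩) hclosure ⟨hb, hb₀⟩

end Gaussian

lemma two_mul_I_cpow_one_half : (2 * I) ^ (1 / 2 : ℂ) = 1 + I := by
  have hsq : (2 * I : ℂ) = (1 + I) ^ 2 := by linear_combination -I_sq
  rw [hsq, one_div, sq_cpow_two_inv (by simp)]

theorem fresnel_first_ibp (x : ℝ) (hx : 0 < x) :
    IntegrableOn (fun t : ℝ => ((t : ℂ) ^ 2)⁻¹ * Complex.exp (Complex.I * π * (t : ℂ) ^ 2 / 2))
      (Set.Ioi x) ∧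
    (1 + Complex.I) / 2 - fresnelG x =
      (Complex.I / π) * Complex.exp (Complex.I * π * (x : ℂ) ^ 2 / 2) / x -
        (Complex.I / π) *
          ∫ t in Set.Ioi x, ((t : ℂ) ^ 2)⁻¹ * Complex.exp (Complex.I * π * (t : ℂ) ^ 2 / 2) := by
  have hπ : (π : ℂ) ≠ 0 := ofReal_ne_zero.mpr pi_ne_zero
  let b : ℂ := -(I * π / 2)
  have hb : 0 ≤ b.re := by simp [b]
  have hb₀ : b ≠ 0 := by simp [b, hπ]
  have hphase (t : ℝ) : I * π * (t : ℂ) ^ 2 / 2 = -b * (t : ℂ) ^ 2 := by ring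
  have hsqrt : (π / b) ^ (1 / 2 : ℂ) = 1 + I := by
    have hquot : π / b = 2 * I := by
      rw [div_eq_iff hb₀]
      linear_combination π * I_sq
    rw [hquot, two_mul_I_cpow_one_half]
  have hcoeff : I / π = (2 * b)⁻¹ := by
    rw [← mul_eq_one_iff_eq_inv₀ (mul_ne_zero two_ne_zero hb₀), div_mul_eq_mul_div, div_eq_iff hπ]
    linear_combination (-π) * I_sq
  simp only [fresnelG, hphase, hcoeff]
  refine ⟨integrableOn_Ioi_inv_sq_mul_cexp_neg_mul_sq hb hx, ?_⟩
  rw [← hsqrt, gaussian_sub_intervalIntegral hb hb₀ hx]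
  ring
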